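/- arXiv:2409.16047 — 3 statements merged into one kernel-verified Lean document; each statement's English description precedes it below -/
import Mathlib

section
/- Let ε > 0, α ∈ [1,2], β ∈ [0, 1/2], f₀ ∈ ℝ, and define the regularized model m : ℝ → ℝ by m(s) = f₀ − (1+β)αε·s + (β/2)·√(αε)·s² + (1/3)|s|³. Then s* = √(αε) satisfies m′(s*) = 0 and s* is a global minimizer of m over ℝ, i.e. m(s*) ≤ m(s) for all s ∈ ℝ. -/
/-!
The model is a cubic-regularized quadratic `s ↦ c + ⟪g, s⟫ + ⟪H s, s⟫ / 2 + σ / 6 * ‖s‖ ^ 3`. With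
`μ = σ / 2 * ‖s‖`, its gradient at `s` is `g + (H + μ) s`. At a critical point `s` this eliminates
`g`, and the growth of the model from `s` to `t` is half the quadratic form of `H + μ` at `t - s`
plus a nonnegative multiple of `(‖t‖ - ‖s‖) ^ 2`. So `s` is a global minimizer whenever `H + μ` is
positive. In the example `H = β * r` and `μ = r` at the point `r = √(α * ε)`, so positivity amounts
to `0 ≤ (1 + β) * r`.
-/

section CubicModel

open scoped InnerProductSpace

variable {E : Type*} [NormedAddCommGroup E] [InnerProductSpace ℝ E]

/-- The quadratic model with value `c`, gradient `g` and Hessian `H` at the origin, regularized by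
the cube of the norm. The factor `σ / 6` follows the convention of `p`-th order regularization,
`σ / (p + 1)! * ‖s‖ ^ (p + 1)` with `p = 2`. -/
noncomputable def cubicModel (c : ℝ) (g : E) (H : E →L[ℝ] E) (σ : ℝ) (s : E) : ℝ :=
  c + ⟪g, s⟫_ℝ + 1 / 2 * ⟪H s, s⟫_ℝ + σ / 6 * ‖s‖ ^ 3

/-- The Hessian of the quadratic part of the cubic model shifted by the multiplier `σ / 2 * ‖s‖`.
It governs the optimality conditions of the model at `s`; it is not the Hessian of the model there,
which also contains the derivative of the multiplier. -/
noncomputable def shiftedHessian (H : E →L[ℝ] E) (σ : ℝ) (s : E) : E →L[ℝ] E :=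
  H + (σ / 2 * ‖s‖) • 1

theorem hasFDerivAt_norm_pow (s : E) {n : ℕ} (hn : 2 ≤ n) :
    HasFDerivAt (fun t : E ↦ ‖t‖ ^ n) ((n * ‖s‖ ^ (n - 2)) • innerSL ℝ s) s := by
  have h := hasFDerivAt_norm_rpow s (p := n) (by exact_mod_cast hn)
  have hcast : (n : ℝ) - 2 = (n - 2 : ℕ) := by push_cast [hn]; rfl
  simpa only [hcast, Real.rpow_natCast] using h

theorem isSymmetric_smul_one (c : ℝ) : (c • (1 : E →L[ℝ] E)).IsSymmetric :=
  LinearMap.IsSymmetric.id.smul rfl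

variable {H : E →L[ℝ] E}

theorem hasFDerivAt_cubicModel (hH : H.IsSymmetric) (c : ℝ) (g : E) (σ : ℝ) (s : E) :
    HasFDerivAt (cubicModel c g H σ) (innerSL ℝ (g + shiftedHessian H σ s s)) s := by
  have linear : HasFDerivAt (fun t ↦ c + ⟪g, t⟫_ℝ) (innerSL ℝ g) s :=
    (innerSL ℝ g).hasFDerivAt.const_add c
  have quadratic : HasFDerivAt (fun t ↦ ⟪H t, t⟫_ℝ) (2 • innerSL ℝ (H s)) s :=
    (hH.hasStrictFDerivAt_reApplyInnerSelf s).hasFDerivAt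
  have cubic := (hasFDerivAt_norm_pow s (n := 3) (by norm_num)).const_mul (σ / 6)
  refine ((linear.add (quadratic.const_mul (1 / 2))).add cubic).congr_fderiv ?_
  ext t
  simp only [shiftedHessian, map_add, map_smul, add_apply, smul_apply, one_apply_eq_self,
    smul_eq_mul, nsmul_eq_mul, Nat.cast_ofNat, Nat.reduceSub, pow_one]
  ring

theorem cubicModel_sub_eq_of_grad_eq_zero (hH : H.IsSymmetric) (c : ℝ) {g : E} {σ : ℝ} {s : E}
    (hs : g + shiftedHessian H σ s s = 0) (t : E) :
    cubicModel c g H σ t - cubicModel c g H σ s =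
      1 / 2 * ⟪shiftedHessian H σ s (t - s), t - s⟫_ℝ +
        σ / 12 * ((‖t‖ - ‖s‖) ^ 2 * (2 * ‖t‖ + ‖s‖)) := by
  have hg : g = -shiftedHessian H σ s s := eq_neg_of_add_eq_zero_left hs
  have hHts : ⟪H t, s⟫_ℝ = ⟪H s, t⟫_ℝ := (hH t s).trans (real_inner_comm _ _)
  have hts : ⟪t, s⟫_ℝ = ⟪s, t⟫_ℝ := real_inner_comm _ _
  simp only [cubicModel, shiftedHessian, hg, add_apply, smul_apply, one_apply_eq_self, map_sub,
    inner_neg_left, inner_add_left, inner_sub_left, inner_sub_right, real_inner_smul_left,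
    real_inner_self_eq_norm_sq, hHts, hts]
  ring

theorem cubicModel_le_of_grad_eq_zero (c : ℝ) {g : E} {σ : ℝ} (hσ : 0 ≤ σ) {s : E}
    (hs : g + shiftedHessian H σ s s = 0) (hpos : (shiftedHessian H σ s).IsPositive) (t : E) :
    cubicModel c g H σ s ≤ cubicModel c g H σ t := by
  have hH : H.IsSymmetric := by
    simpa [shiftedHessian] using hpos.isSymmetric.sub (isSymmetric_smul_one (σ / 2 * ‖s‖))
  have hquad : 0 ≤ ⟪shiftedHessian H σ s (t - s), t - s⟫_ℝ := hpos.inner_nonneg_left (t - s)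
  rw [← sub_nonneg, cubicModel_sub_eq_of_grad_eq_zero hH c hs]
  positivity

end CubicModel

section SlowModel

/-- The model of the slow-convergence example for `q = 1`, with `r` standing for `√(α * ε)`: the
first derivative is `-(1 + β) * r ^ 2`, the second is `β * r`, and `σ = 2`. -/
noncomputable def slowModel (f₀ r β : ℝ) : ℝ → ℝ :=
  cubicModel f₀ (-((1 + β) * r ^ 2)) ((β * r) • 1) 2

theorem slowModel_apply (f₀ r β s : ℝ) :
    slowModel f₀ r β s = f₀ - (1 + β) * r ^ 2 * s + β / 2 * r * s ^ 2 + 1 / 3 * |s| ^ 3 := by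
  simp only [slowModel, cubicModel, RCLike.inner_apply, Real.ringHom_apply, smul_apply,
    one_apply_eq_self, smul_eq_mul, Real.norm_eq_abs]
  ring

variable {r : ℝ}

theorem shiftedHessian_slowModel (hr : 0 ≤ r) (β : ℝ) :
    shiftedHessian ((β * r) • (1 : ℝ →L[ℝ] ℝ)) 2 r = ((1 + β) * r) • 1 := by
  rw [shiftedHessian, ← add_smul, Real.norm_of_nonneg hr]
  ring_nf

theorem grad_slowModel_eq_zero (hr : 0 ≤ r) (β : ℝ) :
    -((1 + β) * r ^ 2) + shiftedHessian ((β * r) • (1 : ℝ →L[ℝ] ℝ)) 2 r r = 0 := by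
  rw [shiftedHessian_slowModel hr, smul_apply, one_apply_eq_self, smul_eq_mul]
  ring

theorem hasDerivAt_slowModel (f₀ : ℝ) (hr : 0 ≤ r) (β : ℝ) :
    HasDerivAt (slowModel f₀ r β) 0 r := by
  have h := hasFDerivAt_cubicModel (isSymmetric_smul_one (β * r)) f₀ (-((1 + β) * r ^ 2)) 2 r
  rw [grad_slowModel_eq_zero hr, map_zero] at h
  exact h.hasDerivAt

theorem slowModel_le (f₀ : ℝ) (hr : 0 ≤ r) {β : ℝ} (hβ : -1 ≤ β) (s : ℝ) :
    slowModel f₀ r β r ≤ slowModel f₀ r β s := by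
  have hpos : (shiftedHessian ((β * r) • (1 : ℝ →L[ℝ] ℝ)) 2 r).IsPositive := by
    rw [shiftedHessian_slowModel hr]
    exact ContinuousLinearMap.isPositive_one.smul_of_nonneg (mul_nonneg (by linarith) hr)
  exact cubicModel_le_of_grad_eq_zero f₀ zero_le_two (grad_slowModel_eq_zero hr β) hpos s

end SlowModel

theorem ar2_model_global_min_q1_general (ε α β f₀ : ℝ) (hαε : 0 ≤ α * ε) (hβ : -1 ≤ β) :
    let m : ℝ → ℝ := fun s =>
      f₀ - (1 + β) * α * ε * s + β / 2 * Real.sqrt (α * ε) * s ^ 2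
        + 1 / 3 * |s| ^ 3
    HasDerivAt m 0 (Real.sqrt (α * ε)) ∧
    ∀ s : ℝ, m (Real.sqrt (α * ε)) ≤ m s := by
  intro m
  have hm : m = slowModel f₀ √(α * ε) β := by
    ext s
    rw [slowModel_apply, Real.sq_sqrt hαε, ← mul_assoc (1 + β)]
  rw [hm]
  exact ⟨hasDerivAt_slowModel f₀ (Real.sqrt_nonneg _) β, slowModel_le f₀ (Real.sqrt_nonneg _) hβ⟩

/-- For the cubic-regularized model of the slow-convergence example in the
case `q = 1` (`σ = 2`), namely
`m s = f₀ − (1+β)αε·s + (β/2)·√(αε)·s² + (1/3)|s|³`,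
the step `s* = √(αε)` is a critical point and a global minimizer of `m`. -/
theorem ar2_model_global_min_q1 (ε α β f₀ : ℝ) (hε : 0 < ε)
    (hα : α ∈ Set.Icc (1 : ℝ) 2) (hβ : β ∈ Set.Icc (0 : ℝ) (1 / 2)) :
    let m : ℝ → ℝ := fun s =>
      f₀ - (1 + β) * α * ε * s + β / 2 * Real.sqrt (α * ε) * s ^ 2
        + 1 / 3 * |s| ^ 3
    deriv m (Real.sqrt (α * ε)) = 0 ∧
    ∀ s : ℝ, m (Real.sqrt (α * ε)) ≤ m s :=
  have h := ar2_model_global_min_q1_general ε α β f₀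
    (mul_nonneg (zero_le_one.trans hα.1) hε.le) (by linarith [hβ.1])
  ⟨h.1.deriv, h.2⟩
end

section
/- Let q ∈ {1,2}, p = 3 − q, ε ∈ (0, 1/4], α ∈ [1, 2], β ∈ [0, 1/2], η ∈ (0, 1), and β₀ ∈ ℝ with |β₀| ≤ (1−η)/4. Then the per-iteration objective decrease D = (αε)^{3/p}·((1+β)/q − β/p − β₀) satisfies (η/4)·(αε)^{3/p} ≤ D ≤ (3/2)·(2ε)^{3/p}. In particular D > 0. -/
/-!
The decrease is a power of the step scale times the factor `(1 + β)/q − β/p − β₀`. Without `β₀` this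
factor is `1 + β/2` (for `q = 1`) or `(1 − β)/2` (for `q = 2`), and `[−3/2, 1/2]` is exactly the
range of `β` for which both lie in `[1/4, 5/4]`. Perturbing by at most `(1 − η)/4` then leaves it in
`[η/4, 3/2]`.
-/

open Set

theorem rpow_mul_mem_Icc {s t r a b c : ℝ} (hs : 0 ≤ s) (hst : s ≤ t) (hr : 0 ≤ r) (hb : 0 ≤ b)
    (hc : c ∈ Icc a b) : s ^ r * c ∈ Icc (a * s ^ r) (b * t ^ r) := by
  have hsr : 0 ≤ s ^ r := Real.rpow_nonneg hs r
  constructor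
  · calc a * s ^ r ≤ c * s ^ r := mul_le_mul_of_nonneg_right hc.1 hsr
      _ = s ^ r * c := mul_comm _ _
  · calc s ^ r * c ≤ s ^ r * b := mul_le_mul_of_nonneg_left hc.2 hsr
      _ ≤ t ^ r * b := mul_le_mul_of_nonneg_right (Real.rpow_le_rpow hs hst hr) hb
      _ = b * t ^ r := mul_comm _ _

theorem sub_mem_Icc_of_abs_le {x y a b δ : ℝ} (hx : x ∈ Icc a b) (hy : |y| ≤ δ) :
    x - y ∈ Icc (a - δ) (b + δ) := by
  obtain ⟨hy_lower, hy_upper⟩ := abs_le.mp hy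
  exact ⟨by linarith [hx.1], by linarith [hx.2]⟩

theorem one_add_div_sub_div_mem_Icc {q p : ℕ} (hq : q = 1 ∨ q = 2) (hp : p = 3 - q) {β : ℝ}
    (hβ : β ∈ Icc (-(3 / 2) : ℝ) (1 / 2)) :
    (1 + β) / q - β / p ∈ Icc (1 / 4 : ℝ) (5 / 4) := by
  obtain ⟨hβ_lower, hβ_upper⟩ := hβ
  rcases hq with rfl | rfl <;> subst hp
  · have factor_eq : (1 + β) / (1 : ℕ) - β / (3 - 1 : ℕ) = 1 + β / 2 := by
      push_cast
      ring
    rw [factor_eq]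
    constructor <;> linarith
  · have factor_eq : (1 + β) / (2 : ℕ) - β / (3 - 2 : ℕ) = (1 - β) / 2 := by
      push_cast
      ring
    rw [factor_eq]
    constructor <;> linarith

theorem one_add_div_sub_div_sub_mem_Icc {q p : ℕ} (hq : q = 1 ∨ q = 2) (hp : p = 3 - q)
    {β η β₀ : ℝ} (hβ : β ∈ Icc (-(3 / 2) : ℝ) (1 / 2)) (hη : 0 ≤ η) (hβ₀ : |β₀| ≤ (1 - η) / 4) :
    (1 + β) / q - β / p - β₀ ∈ Icc (η / 4) (3 / 2) :=
  Icc_subset_Icc (by linarith) (by linarith)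
    (sub_mem_Icc_of_abs_le (one_add_div_sub_div_mem_Icc hq hp hβ) hβ₀)

theorem per_iteration_decrease_bounds_general {q p : ℕ} (hq : q = 1 ∨ q = 2) (hp : p = 3 - q)
    {s t r β η β₀ : ℝ} (hs : 0 < s) (hst : s ≤ t) (hr : 0 ≤ r)
    (hβ : β ∈ Icc (-(3 / 2) : ℝ) (1 / 2)) (hη : 0 < η) (hβ₀ : |β₀| ≤ (1 - η) / 4) :
    let D : ℝ := s ^ r * ((1 + β) / q - β / p - β₀)
    η / 4 * s ^ r ≤ D ∧ D ≤ 3 / 2 * t ^ r ∧ 0 < D := by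
  intro D
  obtain ⟨hD_lower, hD_upper⟩ : D ∈ Icc (η / 4 * s ^ r) (3 / 2 * t ^ r) :=
    rpow_mul_mem_Icc hs.le hst hr (by norm_num)
      (one_add_div_sub_div_sub_mem_Icc hq hp hβ hη.le hβ₀)
  have lower_pos : 0 < η / 4 * s ^ r := by positivity
  exact ⟨hD_lower, hD_upper, lower_pos.trans_le hD_lower⟩

/-- For `q ∈ {1,2}`, `p = 3 − q`, `ε ∈ (0, 1/4]`, `α ∈ [1,2]`, `β ∈ [0,1/2]`,
`η ∈ (0,1)` and `|β₀| ≤ (1−η)/4`, the per-iteration objective decrease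
`D = (αε)^{3/p}·((1+β)/q − β/p − β₀)` satisfies
`(η/4)·(αε)^{3/p} ≤ D ≤ (3/2)·(2ε)^{3/p}`; in particular `D > 0`. -/
theorem per_iteration_decrease_bounds (q p : ℕ) (hq : q = 1 ∨ q = 2)
    (hp : p = 3 - q) (ε α β η β₀ : ℝ) (hε : ε ∈ Set.Ioc (0 : ℝ) (1 / 4))
    (hα : α ∈ Set.Icc (1 : ℝ) 2) (hβ : β ∈ Set.Icc (0 : ℝ) (1 / 2))
    (hη : η ∈ Set.Ioo (0 : ℝ) 1) (hβ₀ : |β₀| ≤ (1 - η) / 4) :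
    let D : ℝ := (α * ε) ^ ((3 : ℝ) / p) * ((1 + β) / q - β / p - β₀)
    η / 4 * (α * ε) ^ ((3 : ℝ) / p) ≤ D ∧
    D ≤ 3 / 2 * (2 * ε) ^ ((3 : ℝ) / p) ∧
    0 < D := by
  have hαε_pos : 0 < α * ε := mul_pos (by linarith [hα.1]) hε.1
  have hαε_le : α * ε ≤ 2 * ε := mul_le_mul_of_nonneg_right hα.2 hε.1.le
  exact per_iteration_decrease_bounds_general hq hp hαε_pos hαε_le (by positivity)
    (Icc_subset_Icc_left (by norm_num) hβ) hη.1 hβ₀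
end

section
/- Let n ≥ 1 and let f : ℝⁿ → ℝ be twice continuously differentiable. Then the second-order criticality measure φ_{f,2}(x) = f(x) − min_{‖d‖≤1} (f(x) + ⟨∇f(x), d⟩ + (1/2)⟨∇²f(x)d, d⟩) is a continuous function of x. -/
open RealInnerProductSpace

/-!
A quadratic polynomial is linear in its coefficients, so on steps of norm at most `R` a perturbation
of the value, gradient and Hessian by `δc`, `δg` and `δH` changes it by at most
`|δc| + ‖δg‖ R + ‖δH‖ R² / 2`. Hence, as the base point varies, the second-order Taylor polynomials
of a `C²` function converge uniformly on bounded sets of steps, and infima pass to uniform limits.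
-/

open Filter Set Topology Bornology

section InfimumOfUniformLimit

variable {α ι : Type*} {s : Set α}

lemma sInf_image_le_sInf_image_add {F G : α → ℝ} {ε : ℝ} (hs : s.Nonempty)
    (hF : BddBelow (F '' s)) (h : ∀ a ∈ s, F a ≤ G a + ε) :
    sInf (F '' s) ≤ sInf (G '' s) + ε := by
  rw [← sub_le_iff_le_add]
  refine le_csInf (hs.image G) (forall_mem_image.2 fun a ha => ?_)
  rw [sub_le_iff_le_add]
  exact (csInf_le hF (mem_image_of_mem F ha)).trans (h a ha)

lemma abs_sInf_image_sub_sInf_image_le {F G : α → ℝ} {ε : ℝ} (hs : s.Nonempty)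
    (hF : BddBelow (F '' s)) (hG : BddBelow (G '' s)) (h : ∀ a ∈ s, |F a - G a| ≤ ε) :
    |sInf (F '' s) - sInf (G '' s)| ≤ ε := by
  have hFG : sInf (F '' s) ≤ sInf (G '' s) + ε :=
    sInf_image_le_sInf_image_add hs hF fun a ha => by linarith [(abs_le.1 (h a ha)).2]
  have hGF : sInf (G '' s) ≤ sInf (F '' s) + ε :=
    sInf_image_le_sInf_image_add hs hG fun a ha => by linarith [(abs_le.1 (h a ha)).1]
  exact abs_sub_le_iff.2 ⟨by linarith, by linarith⟩

lemma tendsto_sInf_image_of_tendstoUniformlyOn {l : Filter ι} {F : ι → α → ℝ} {G : α → ℝ}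
    (hs : s.Nonempty) (hF : ∀ i, BddBelow (F i '' s)) (hG : BddBelow (G '' s))
    (h : TendstoUniformlyOn F G l s) :
    Tendsto (fun i => sInf (F i '' s)) l (𝓝 (sInf (G '' s))) := by
  refine Metric.tendsto_nhds.2 fun ε hε => ?_
  filter_upwards [Metric.tendstoUniformlyOn_iff.1 h (ε / 2) (half_pos hε)] with i hi
  have hclose : ∀ a ∈ s, |F i a - G a| ≤ ε / 2 := fun a ha => by
    rw [← Real.dist_eq, dist_comm]
    exact (hi a ha).le
  exact (abs_sInf_image_sub_sInf_image_le hs (hF i) hG hclose).trans_lt (half_lt_self hε)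

end InfimumOfUniformLimit

section QuadraticModel

variable {E : Type*} [NormedAddCommGroup E] [InnerProductSpace ℝ E]

/-- The quadratic polynomial in the step `d` with constant term `c`, linear part `g` and quadratic
part `H`. With the value, gradient and Hessian of `f` at `x` as coefficients, it is the second-order
Taylor polynomial of `f` at `x`, in terms of the step `d`. -/
noncomputable def quadraticModel (c : ℝ) (g : E) (H : E →L[ℝ] E) (d : E) : ℝ :=
  c + ⟪g, d⟫ + 1 / 2 * ⟪H d, d⟫

lemma quadraticModel_sub (c c' : ℝ) (g g' : E) (H H' : E →L[ℝ] E) (d : E) :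
    quadraticModel (c - c') (g - g') (H - H') d =
      quadraticModel c g H d - quadraticModel c' g' H' d := by
  simp only [quadraticModel, sub_apply, inner_sub_left]
  ring

lemma abs_quadraticModel_le (c : ℝ) (g : E) (H : E →L[ℝ] E) {d : E} {R : ℝ} (hd : ‖d‖ ≤ R) :
    |quadraticModel c g H d| ≤ |c| + ‖g‖ * R + 1 / 2 * (‖H‖ * R * R) := by
  have hR : 0 ≤ R := (norm_nonneg d).trans hd
  have linear_le : |⟪g, d⟫| ≤ ‖g‖ * R :=
    (abs_real_inner_le_norm g d).trans (by gcongr)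
  have quadratic_le : |⟪H d, d⟫| ≤ ‖H‖ * R * R :=
    (abs_real_inner_le_norm (H d) d).trans (by gcongr; exact H.le_of_opNorm_le_of_le le_rfl hd)
  calc |quadraticModel c g H d|
      ≤ |c| + |⟪g, d⟫| + |1 / 2 * ⟪H d, d⟫| := abs_add_three _ _ _
    _ = |c| + |⟪g, d⟫| + 1 / 2 * |⟪H d, d⟫| := by rw [abs_mul, abs_of_pos (one_half_pos (α := ℝ))]
    _ ≤ |c| + ‖g‖ * R + 1 / 2 * (‖H‖ * R * R) := by gcongr

lemma bddBelow_image_quadraticModel {s : Set E} (hs : IsBounded s) (c : ℝ) (g : E)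
    (H : E →L[ℝ] E) : BddBelow (quadraticModel c g H '' s) := by
  obtain ⟨R, hR⟩ := hs.exists_norm_le
  exact ⟨_, forall_mem_image.2 fun d hd => (abs_le.1 (abs_quadraticModel_le c g H (hR d hd))).1⟩

lemma tendstoUniformlyOn_quadraticModel {ι : Type*} {l : Filter ι} {s : Set E} (hs : IsBounded s)
    {c : ι → ℝ} {g : ι → E} {H : ι → E →L[ℝ] E} {c₀ : ℝ} {g₀ : E} {H₀ : E →L[ℝ] E}
    (hc : Tendsto c l (𝓝 c₀)) (hg : Tendsto g l (𝓝 g₀)) (hH : Tendsto H l (𝓝 H₀)) :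
    TendstoUniformlyOn (fun i => quadraticModel (c i) (g i) (H i)) (quadraticModel c₀ g₀ H₀)
      l s := by
  obtain ⟨R, hR⟩ := hs.exists_norm_le
  have bound_tendsto : Tendsto
      (fun i => |c₀ - c i| + ‖g₀ - g i‖ * R + 1 / 2 * (‖H₀ - H i‖ * R * R)) l (𝓝 0) := by
    simpa only [sub_self, abs_zero, norm_zero, zero_mul, mul_zero, add_zero] using
      ((hc.const_sub c₀).abs.add ((hg.const_sub g₀).norm.mul_const R)).add
        ((((hH.const_sub H₀).norm.mul_const R).mul_const R).const_mul (1 / 2))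
  refine Metric.tendstoUniformlyOn_iff.2 fun ε hε => ?_
  filter_upwards [bound_tendsto.eventually_lt_const hε] with i hi d hd
  rw [Real.dist_eq, ← quadraticModel_sub]
  exact (abs_quadraticModel_le _ _ _ (hR d hd)).trans_lt hi

lemma continuous_sInf_image_quadraticModel {X : Type*} [TopologicalSpace X] {s : Set E}
    (hs : IsBounded s) (hne : s.Nonempty) {c : X → ℝ} {g : X → E} {H : X → E →L[ℝ] E}
    (hc : Continuous c) (hg : Continuous g) (hH : Continuous H) :
    Continuous fun x => sInf (quadraticModel (c x) (g x) (H x) '' s) :=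
  continuous_iff_continuousAt.2 fun x =>
    tendsto_sInf_image_of_tendstoUniformlyOn hne
      (fun _ => bddBelow_image_quadraticModel hs _ _ _) (bddBelow_image_quadraticModel hs _ _ _)
      (tendstoUniformlyOn_quadraticModel hs (hc.tendsto x) (hg.tendsto x) (hH.tendsto x))

end QuadraticModel

section HilbertSpace

variable {E : Type*} [NormedAddCommGroup E] [InnerProductSpace ℝ E] [CompleteSpace E] {f : E → ℝ}

lemma contDiff_gradient {m n : WithTop ℕ∞} (hf : ContDiff ℝ n f) (hmn : m + 1 ≤ n) :
    ContDiff ℝ m (gradient f) :=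
  (InnerProductSpace.toDual ℝ E).symm.toContinuousLinearEquiv.contDiff.comp (hf.fderiv_right hmn)

theorem phi_two_continuous_general (hf : ContDiff ℝ 2 f) {s : Set E} (hs : IsBounded s)
    (hne : s.Nonempty) :
    Continuous fun x => f x - sInf ((fun d =>
      f x + ⟪gradient f x, d⟫ + 1 / 2 * ⟪fderiv ℝ (gradient f) x d, d⟫) '' s) := by
  have gradient_contDiff : ContDiff ℝ 1 (gradient f) := contDiff_gradient hf one_add_one_eq_two.le
  have hessian_continuous : Continuous (fderiv ℝ (gradient f)) :=
    gradient_contDiff.continuous_fderiv one_ne_zero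
  exact hf.continuous.sub (continuous_sInf_image_quadraticModel hs hne hf.continuous
    gradient_contDiff.continuous hessian_continuous)

end HilbertSpace

/-- For a twice continuously differentiable `f : ℝⁿ → ℝ` (`n ≥ 1`), the
second-order criticality measure
`φ_{f,2}(x) = f x − min_{‖d‖≤1} (f x + ⟪∇f x, d⟫ + (1/2)⟪∇²f x d, d⟫)`
is a continuous function of `x`. -/
theorem phi_two_continuous (n : ℕ) (hn : 1 ≤ n)
    (f : EuclideanSpace ℝ (Fin n) → ℝ) (hf : ContDiff ℝ 2 f) :
    Continuous (fun x : EuclideanSpace ℝ (Fin n) =>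
      f x - sInf ((fun d : EuclideanSpace ℝ (Fin n) =>
        f x + ⟪gradient f x, d⟫ + 1 / 2 * ⟪fderiv ℝ (gradient f) x d, d⟫) ''
          Metric.closedBall 0 1)) :=
  phi_two_continuous_general hf Metric.isBounded_closedBall ⟨0, by simp⟩
end
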